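/- Let n ≥ 1 and ζ_1, …, ζ_n ∈ ℂ. Then the recursively defined Laurent polynomial x^{(n)}(ζ_1, …, ζ_n) equals the singular part (the sum of all strictly negative-degree terms) of δ_n^{−1}·β_n computed in the field ℂ((z)) of formal Laurent series, where M_n(ζ) = (α_n, β_n; γ_n, δ_n) and δ_n is invertible in ℂ((z)) because its constant term equals 1. -/

import Mathlib

open Matrix

/-- The singular part `(f)₋` of a Laurent series: the sum of its strictly
negative-degree terms. -/
noncomputable def singPart (f : LaurentSeries ℂ) : LaurentSeries ℂ where
  coeff k := if k < 0 then f.coeff k else 0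
  isPWO_support' := by
    apply f.isPWO_support'.mono
    intro k hk
    simp only [Function.mem_support] at hk ⊢
    by_cases h : k < 0
    · simpa [h] using hk
    · simp [h] at hk

/-- The recursively defined Laurent polynomials `x⁽ᵏ⁾(ζ₁, …, ζ_k)`:
`x⁽¹⁾ = ζ₁ z⁻¹` and
`x⁽ᵏ⁺¹⁾ = ((1+|ζ_{k+1}|²) Σ_{p=0}^k conj(ζ_{k+1})^p (x⁽ᵏ⁾)^{p+1} z^{p(k+1)})₋ + ζ_{k+1} z^{−k−1}`
(`ζ` is indexed starting at `1`; the base case is subsumed via `x⁽⁰⁾ = 0`). -/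
noncomputable def xrec (ζ : ℕ → ℂ) : ℕ → LaurentSeries ℂ
  | 0 => 0
  | m + 1 =>
      singPart (HahnSeries.single (0 : ℤ) (((1 + ‖ζ (m + 1)‖ ^ 2 : ℝ) : ℂ)) *
          ∑ p ∈ Finset.range (m + 1),
            HahnSeries.single (0 : ℤ) ((starRingEnd ℂ (ζ (m + 1))) ^ p) *
              xrec ζ m ^ (p + 1) * HahnSeries.single ((p : ℤ) * ((m : ℤ) + 1)) 1)
        + HahnSeries.single (-(m : ℤ) - 1) (ζ (m + 1))

/-- The factor `(1, ζ_j z^{-j}; −conj(ζ_j) z^{j}, 1)`. -/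
noncomputable def factor (j : ℕ) (c : ℂ) : Matrix (Fin 2) (Fin 2) (LaurentSeries ℂ) :=
  !![1, HahnSeries.single (-(j : ℤ)) c;
     HahnSeries.single ((j : ℤ)) (-(starRingEnd ℂ c)), 1]

/-- `M_n(ζ)`: the product of the factors for `j = n, n−1, …, 1`, the `j = n` factor leftmost. -/
noncomputable def Mmat (ζ : ℕ → ℂ) : ℕ → Matrix (Fin 2) (Fin 2) (LaurentSeries ℂ)
  | 0 => 1
  | k + 1 => factor (k + 1) (ζ (k + 1)) * Mmat ζ k

/-!
Write `w_n = δ_n⁻¹ β_n`. Multiplying `M_n` on the left by a factor acts on `w_n` by the Möbius map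
`w ↦ (w + v) / (1 - u w) = (1 + u v) w / (1 - u w) + v`, where `u = conj(ζ_{n+1}) z^{n+1}` and
`v = ζ_{n+1} z^{-n-1}`, so that `1 + u v = 1 + |ζ_{n+1}|²`. By induction `β_n` has order at least
`-n` and `δ_n - 1` has positive order, so `w_n` has order at least `-n` and `u w_n` has positive
order. Hence changing `w_n` by a series of nonnegative order, in particular replacing it by its
singular part, changes `w_n / (1 - u w_n)` only by a series of nonnegative order, and so does
truncating the geometric expansion of `1 / (1 - u w_n)` after `n + 1` terms. What is left is
the recursion defining `x⁽ⁿ⁺¹⁾`.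
-/

section AddValuation

variable {K Γ₀ : Type*} [Field K] [LinearOrderedAddCommGroupWithTop Γ₀] (v : AddValuation K Γ₀)

theorem addValuation_one_sub_eq_zero {t : K} (ht : 0 < v t) : v (1 - t) = 0 := by
  rw [v.map_sub_eq_of_lt_left (by rwa [v.map_one]), v.map_one]

theorem one_sub_ne_zero_of_addValuation_pos {t : K} (ht : 0 < v t) : 1 - t ≠ 0 := by
  rw [← v.ne_top_iff, addValuation_one_sub_eq_zero v ht]
  exact LinearOrderedAddCommGroupWithTop.zero_ne_top

theorem addValuation_div_one_sub {t : K} (ht : 0 < v t) (x : K) : v (x / (1 - t)) = v x := by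
  rw [div_eq_mul_inv, v.map_mul, v.map_inv, addValuation_one_sub_eq_zero v ht, neg_zero, add_zero]

theorem addValuation_div_one_sub_mul_sub {u x y : K} (hx : 0 < v (u * x)) (hy : 0 < v (u * y)) :
    v (x / (1 - u * x) - y / (1 - u * y)) = v (x - y) := by
  have h : x / (1 - u * x) - y / (1 - u * y) = (x - y) / (1 - u * x) / (1 - u * y) := by
    rw [div_sub_div _ _ (one_sub_ne_zero_of_addValuation_pos v hx)
      (one_sub_ne_zero_of_addValuation_pos v hy), div_div]
    congr 1
    ring
  rw [h, addValuation_div_one_sub v hy, addValuation_div_one_sub v hx]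

theorem addValuation_geom_sum_sub {u x : K} (hx : 0 < v (u * x)) (n : ℕ) :
    v (∑ p ∈ Finset.range n, u ^ p * x ^ (p + 1) - x / (1 - u * x)) = v x + n • v (u * x) := by
  have hne : 1 - u * x ≠ 0 := one_sub_ne_zero_of_addValuation_pos v hx
  have hsum : ∑ p ∈ Finset.range n, u ^ p * x ^ (p + 1) =
      x * ∑ p ∈ Finset.range n, (u * x) ^ p := by
    rw [Finset.mul_sum]
    exact Finset.sum_congr rfl fun p _ => by ring
  have hremainder : ∑ p ∈ Finset.range n, u ^ p * x ^ (p + 1) - x / (1 - u * x) =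
      -(x * (u * x) ^ n / (1 - u * x)) := by
    rw [hsum, ← neg_div, eq_div_iff hne, sub_mul, mul_assoc, geom_sum_mul_neg,
      div_mul_cancel₀ _ hne]
    ring
  rw [hremainder, v.map_neg, addValuation_div_one_sub v hx, v.map_mul, v.map_pow]

end AddValuation

section LaurentSeries

theorem one_le_orderTop_mul {R : Type*} [Semiring R] {u w : LaurentSeries R} {a b : ℤ}
    (hu : (a : WithTop ℤ) ≤ u.orderTop) (hw : (b : WithTop ℤ) ≤ w.orderTop) (hab : 1 ≤ a + b) :
    1 ≤ (u * w).orderTop := by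
  calc (1 : WithTop ℤ) ≤ (a : WithTop ℤ) + b := by exact_mod_cast hab
    _ ≤ u.orderTop + w.orderTop := add_le_add hu hw
    _ ≤ (u * w).orderTop := HahnSeries.orderTop_add_le_mul

theorem one_add_single_conj_mul_single (c : ℂ) (d : ℤ) :
    1 + HahnSeries.single d (starRingEnd ℂ c) * HahnSeries.single (-d) c =
      HahnSeries.single (0 : ℤ) ((1 + ‖c‖ ^ 2 : ℝ) : ℂ) := by
  rw [HahnSeries.single_mul_single, add_neg_cancel, Complex.conj_mul', ← HahnSeries.single_zero_one,
    ← HahnSeries.single_add]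
  push_cast
  rfl

end LaurentSeries

section SingPart

theorem singPart_zero : singPart 0 = 0 := by
  ext k
  simp [singPart]

theorem singPart_add (f g : LaurentSeries ℂ) : singPart (f + g) = singPart f + singPart g := by
  ext k
  by_cases hk : k < 0 <;> simp [singPart, hk]

theorem singPart_single {d : ℤ} (hd : d < 0) (c : ℂ) :
    singPart (HahnSeries.single d c) = HahnSeries.single d c := by
  ext k
  by_cases hk : k < 0
  · simp [singPart, hk]
  · simp [singPart, hk, HahnSeries.coeff_single_of_ne (show k ≠ d by omega)]

theorem orderTop_le_orderTop_singPart (f : LaurentSeries ℂ) :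
    f.orderTop ≤ (singPart f).orderTop := by
  rw [HahnSeries.le_orderTop_iff_forall]
  intro k hk
  simp [singPart, HahnSeries.coeff_eq_zero_of_lt_orderTop hk]

theorem orderTop_singPart_sub_nonneg (f : LaurentSeries ℂ) :
    0 ≤ (singPart f - f).orderTop := by
  rw [HahnSeries.le_orderTop_iff_forall]
  intro k hk
  simp [singPart, WithTop.coe_lt_zero.mp hk]

theorem singPart_eq_of_orderTop_sub_nonneg {f g : LaurentSeries ℂ}
    (h : 0 ≤ (f - g).orderTop) : singPart f = singPart g := by
  ext k
  by_cases hk : k < 0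
  · have := HahnSeries.coeff_eq_zero_of_lt_orderTop ((WithTop.coe_lt_zero.mpr hk).trans_le h)
    simpa [singPart, hk, sub_eq_zero] using this
  · simp [singPart, hk]

theorem singPart_mul_geom_sum_singPart {a u w : LaurentSeries ℂ} {m n : ℕ} (hmn : m ≤ n)
    (ha : 0 ≤ a.orderTop) (hu : ((m + 1 : ℤ) : WithTop ℤ) ≤ u.orderTop)
    (hw : ((-m : ℤ) : WithTop ℤ) ≤ w.orderTop) :
    singPart (a * ∑ p ∈ Finset.range n, u ^ p * singPart w ^ (p + 1)) =
      singPart (a * (w / (1 - u * w))) := by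
  set x := singPart w
  have hx : ((-m : ℤ) : WithTop ℤ) ≤ x.orderTop := hw.trans (orderTop_le_orderTop_singPart w)
  have hux : 1 ≤ (u * x).orderTop := one_le_orderTop_mul hu hx (by omega)
  have huw : 1 ≤ (u * w).orderTop := one_le_orderTop_mul hu hw (by omega)
  have htrunc :
      0 ≤ (∑ p ∈ Finset.range n, u ^ p * x ^ (p + 1) - x / (1 - u * x)).orderTop :=
    calc (0 : WithTop ℤ) ≤ ((-m : ℤ) : WithTop ℤ) + n • 1 := by
          rw [nsmul_one]
          norm_cast
          omega
      _ ≤ x.orderTop + n • (u * x).orderTop := add_le_add hx (nsmul_le_nsmul_right hux n)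
      _ = _ := (addValuation_geom_sum_sub (HahnSeries.addVal ℤ ℂ)
        (zero_lt_one.trans_le hux) n).symm
  have hmobius : 0 ≤ (x / (1 - u * x) - w / (1 - u * w)).orderTop :=
    (orderTop_singPart_sub_nonneg w).trans_eq
      (addValuation_div_one_sub_mul_sub (HahnSeries.addVal ℤ ℂ)
        (zero_lt_one.trans_le hux) (zero_lt_one.trans_le huw)).symm
  apply singPart_eq_of_orderTop_sub_nonneg
  rw [← mul_sub, HahnSeries.orderTop_mul]
  refine add_nonneg ha ?_
  rw [← sub_add_sub_cancel _ (x / (1 - u * x))]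
  exact (HahnSeries.addVal ℤ ℂ).map_le_add htrunc hmobius

end SingPart

section Mmat

variable (ζ : ℕ → ℂ) (n : ℕ)

theorem Mmat_succ_zero_one : Mmat ζ (n + 1) 0 1 =
    Mmat ζ n 0 1 + HahnSeries.single (-(n : ℤ) - 1) (ζ (n + 1)) * Mmat ζ n 1 1 := by
  simp [Mmat, factor, Matrix.mul_apply, Fin.sum_univ_two, sub_eq_neg_add]

theorem Mmat_succ_one_one : Mmat ζ (n + 1) 1 1 =
    Mmat ζ n 1 1 - HahnSeries.single ((n : ℤ) + 1) (starRingEnd ℂ (ζ (n + 1))) * Mmat ζ n 0 1 := by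
  simp only [Mmat, factor, Matrix.mul_apply, Fin.sum_univ_two, Matrix.of_apply, Matrix.cons_val',
    Matrix.cons_val_zero, Matrix.cons_val_one, Matrix.cons_val_fin_one, HahnSeries.single_neg,
    Nat.cast_succ]
  ring

theorem orderTop_Mmat_bounds : ((-n : ℤ) : WithTop ℤ) ≤ (Mmat ζ n 0 1).orderTop ∧
    0 < (Mmat ζ n 1 1 - 1).orderTop := by
  induction n with
  | zero => simp [Mmat]
  | succ n ih =>
    obtain ⟨hβ, hδ⟩ := ih
    have hδ_order : (Mmat ζ n 1 1).orderTop = 0 :=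
      ((HahnSeries.orderTop_self_sub_one_pos_iff _).mp hδ).1
    constructor
    · rw [Mmat_succ_zero_one]
      refine (HahnSeries.addVal ℤ ℂ).map_le_add (hβ.trans' ?_) ?_
      · exact WithTop.coe_le_coe.mpr (by omega)
      · rw [HahnSeries.addVal_apply, HahnSeries.orderTop_mul,
          hδ_order, add_zero, Nat.cast_succ, neg_add']
        exact HahnSeries.orderTop_single_le
    · rw [Mmat_succ_one_one, sub_right_comm]
      have huβ := one_le_orderTop_mul (u := HahnSeries.single ((n : ℤ) + 1)
        (starRingEnd ℂ (ζ (n + 1)))) HahnSeries.orderTop_single_le hβ (by omega)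
      exact (lt_min hδ (zero_lt_one.trans_le huβ)).trans_le
        HahnSeries.min_orderTop_le_orderTop_sub

theorem orderTop_Mmat_one_one : (Mmat ζ n 1 1).orderTop = 0 :=
  ((HahnSeries.orderTop_self_sub_one_pos_iff _).mp (orderTop_Mmat_bounds ζ n).2).1

theorem coeff_zero_Mmat_one_one : (Mmat ζ n 1 1).coeff 0 = 1 := by
  have h : (Mmat ζ n 1 1 - 1).coeff 0 = 0 :=
    HahnSeries.coeff_eq_zero_of_lt_orderTop (orderTop_Mmat_bounds ζ n).2
  rwa [HahnSeries.coeff_sub, HahnSeries.coeff_one, if_pos rfl, sub_eq_zero] at h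

theorem Mmat_one_one_ne_zero : Mmat ζ n 1 1 ≠ 0 := by
  rw [← HahnSeries.orderTop_ne_top, orderTop_Mmat_one_one]
  exact WithTop.zero_ne_top

/-- The quotient `δ_n⁻¹ β_n` of the second column of `M_n(ζ)`, on which left multiplication of
`M_n(ζ)` by a matrix acts as a Möbius transformation. -/
noncomputable def MmatRatio : LaurentSeries ℂ :=
  (Mmat ζ n 1 1)⁻¹ * Mmat ζ n 0 1

theorem neg_le_orderTop_MmatRatio : ((-n : ℤ) : WithTop ℤ) ≤ (MmatRatio ζ n).orderTop := by
  have hinv : (Mmat ζ n 1 1)⁻¹.orderTop = 0 := by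
    rw [← HahnSeries.addVal_apply, AddValuation.map_inv, HahnSeries.addVal_apply,
      orderTop_Mmat_one_one, neg_zero]
  rw [MmatRatio, HahnSeries.orderTop_mul, hinv, zero_add]
  exact (orderTop_Mmat_bounds ζ n).1

theorem MmatRatio_succ : MmatRatio ζ (n + 1) =
    HahnSeries.single (0 : ℤ) ((1 + ‖ζ (n + 1)‖ ^ 2 : ℝ) : ℂ) * (MmatRatio ζ n /
      (1 - HahnSeries.single ((n : ℤ) + 1) (starRingEnd ℂ (ζ (n + 1))) * MmatRatio ζ n)) +
    HahnSeries.single (-(n : ℤ) - 1) (ζ (n + 1)) := by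
  set u := HahnSeries.single ((n : ℤ) + 1) (starRingEnd ℂ (ζ (n + 1)))
  set v := HahnSeries.single (-(n : ℤ) - 1) (ζ (n + 1))
  set w := MmatRatio ζ n
  set δ := Mmat ζ n 1 1
  have hβ : Mmat ζ n 0 1 = δ * w := (mul_inv_cancel_left₀ (Mmat_one_one_ne_zero ζ n) _).symm
  have hδ' : Mmat ζ (n + 1) 1 1 = δ * (1 - u * w) := by
    rw [Mmat_succ_one_one, hβ]
    ring
  have hβ' : Mmat ζ (n + 1) 0 1 = δ * (w + v) := by
    rw [Mmat_succ_zero_one, hβ]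
    ring
  have hden : 1 - u * w ≠ 0 := right_ne_zero_of_mul (hδ' ▸ Mmat_one_one_ne_zero ζ (n + 1))
  have hnorm : 1 + u * v = HahnSeries.single (0 : ℤ) ((1 + ‖ζ (n + 1)‖ ^ 2 : ℝ) : ℂ) := by
    rw [← one_add_single_conj_mul_single _ ((n : ℤ) + 1), neg_add']
  calc MmatRatio ζ (n + 1) = (w + v) / (1 - u * w) := by
        rw [MmatRatio, hδ', hβ', inv_mul_eq_div,
          mul_div_mul_left _ _ (Mmat_one_one_ne_zero ζ n)]
    _ = (1 + u * v) * (w / (1 - u * w)) + v := by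
        rw [← mul_div_assoc, div_add' _ _ _ hden]
        congr 1
        ring
    _ = _ := by rw [hnorm]

theorem xrec_succ : xrec ζ (n + 1) =
    singPart (HahnSeries.single (0 : ℤ) ((1 + ‖ζ (n + 1)‖ ^ 2 : ℝ) : ℂ) *
      ∑ p ∈ Finset.range (n + 1),
        HahnSeries.single ((n : ℤ) + 1) (starRingEnd ℂ (ζ (n + 1))) ^ p * xrec ζ n ^ (p + 1)) +
    HahnSeries.single (-(n : ℤ) - 1) (ζ (n + 1)) := by
  rw [xrec]
  congr 3
  refine Finset.sum_congr rfl fun p _ => ?_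
  rw [HahnSeries.single_pow, mul_right_comm, HahnSeries.single_mul_single, zero_add, mul_one,
    nsmul_eq_mul]

theorem xrec_eq_singPart_MmatRatio : xrec ζ n = singPart (MmatRatio ζ n) := by
  induction n with
  | zero => simp [xrec, MmatRatio, Mmat, singPart_zero]
  | succ n ih =>
    rw [xrec_succ, ih, singPart_mul_geom_sum_singPart n.le_succ HahnSeries.orderTop_single_le
      HahnSeries.orderTop_single_le (neg_le_orderTop_MmatRatio ζ n), MmatRatio_succ,
      singPart_add, singPart_single (by omega)]

end Mmat

/-- With `M_n(ζ) = (α_n, β_n; γ_n, δ_n)`: the constant term of `δ_n` equals `1` (so `δ_n` is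
invertible in the field of formal Laurent series), and `x⁽ⁿ⁾(ζ₁, …, ζ_n)` equals the singular
part of `δ_n⁻¹ β_n`. -/
theorem stmt7 (n : ℕ) (hn : 1 ≤ n) (ζ : ℕ → ℂ) :
    ((Mmat ζ n) 1 1).coeff 0 = 1 ∧
    xrec ζ n = singPart (((Mmat ζ n) 1 1)⁻¹ * (Mmat ζ n) 0 1) :=
  ⟨coeff_zero_Mmat_one_one ζ n, xrec_eq_singPart_MmatRatio ζ n⟩
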